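/- arXiv:math/0506409 — 2 statements merged into one kernel-verified Lean document; each statement's English description precedes it below -/
import Mathlib

section
/- Multiscale Riemann–Lebesgue lemma: Let φ : (ℝ^d)^n → ℝ be continuous and ℤ^d-periodic in each of its n vector arguments, and set φ_h(x) := φ(x/ρ_1(ε_h), …, x/ρ_n(ε_h)). Then φ_h converges to the constant ∫_{□^n} φ(y¹,…,yⁿ) dy¹…dyⁿ in the weak* topology of L^∞(Ω); that is, for every u ∈ L^1(Ω) one has ∫_Ω u(x) φ_h(x) dx → (∫_{□^n} φ(y) dy)·(∫_Ω u(x) dx) as h → ∞. -/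
open MeasureTheory Filter Topology

/-- The unit cell `□ = [0,1)^d` in `ℝ^d`. -/
def unitCell (d : ℕ) : Set (Fin d → ℝ) := Set.univ.pi fun _ => Set.Ico (0 : ℝ) 1

/-- The `n`-fold product `□^n` of unit cells. -/
def unitCellPow (d n : ℕ) : Set (Fin n → Fin d → ℝ) := Set.univ.pi fun _ => unitCell d

/-- `φ : (ℝ^d)^n → ℝ` is `ℤ^d`-periodic in each of its `n` vector arguments. -/
def PeriodicN {d n : ℕ} (φ : (Fin n → Fin d → ℝ) → ℝ) : Prop :=
  ∀ (y : Fin n → Fin d → ℝ) (c : Fin n → Fin d → ℤ),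
    φ (fun k i => y k i + (c k i : ℝ)) = φ y

/-- Density argument: pointwise convergence to zero on a set with dense span suffices. -/
lemma ms_dense_tendsto {E : Type*} [NormedAddCommGroup E] [NormedSpace ℂ E]
    (D : ℕ → E →ₗ[ℂ] ℂ) (C : ℝ) (hC : ∀ h f, ‖D h f‖ ≤ C * ‖f‖) (S : Set E)
    (hS : (Submodule.span ℂ S).topologicalClosure = ⊤)
    (hT : ∀ s ∈ S, Tendsto (fun h => D h s) atTop (𝓝 0)) (f : E) :
    Tendsto (fun h => D h f) atTop (𝓝 0) := by
  have hspan : ∀ g ∈ Submodule.span ℂ S, Tendsto (fun h => D h g) atTop (𝓝 0) := by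
    intro g hg
    induction hg using Submodule.span_induction with
    | mem x hx => exact hT x hx
    | zero => simp
    | add x y _ _ hx hy => simpa using hx.add hy
    | smul a x _ hx => simpa using hx.const_mul a
  rw [Metric.tendsto_atTop]
  intro e he
  have hf : f ∈ closure (Submodule.span ℂ S : Set E) := by
    have : f ∈ (Submodule.span ℂ S).topologicalClosure := by rw [hS]; trivial
    exact this
  have hC1 : 0 < |C| + 1 := by positivity
  obtain ⟨g, hg, hfg⟩ := Metric.mem_closure_iff.1 hf (e / 2 / (|C| + 1)) (by positivity)
  obtain ⟨N, hN⟩ := (Metric.tendsto_atTop.1 (hspan g hg)) (e / 2) (by positivity)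
  refine ⟨N, fun h hh => ?_⟩
  have h1 := hN h hh
  rw [dist_zero_right] at h1 ⊢
  have h2 : ‖D h (f - g)‖ ≤ (|C| + 1) * ‖f - g‖ :=
    (hC h _).trans (mul_le_mul_of_nonneg_right (by linarith [le_abs_self C]) (norm_nonneg _))
  rw [dist_eq_norm, lt_div_iff₀ hC1] at hfg
  have h3 : D h f = D h (f - g) + D h g := by simp
  rw [h3]
  refine (norm_add_le _ _).trans_lt ?_
  linarith [mul_comm (|C| + 1) ‖f - g‖]

/-- Frequencies go to infinity. -/
lemma ms_freq {d n : ℕ} (r : Fin n → ℕ → ℝ) (hpos : ∀ k h, 0 < r k h)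
    (h0 : ∀ k, Tendsto (r k) atTop (𝓝 0))
    (hsep : ∀ i j, i < j → Tendsto (fun h => r j h / r i h) atTop (𝓝 0))
    (m : Fin n × Fin d → ℤ) (hm : m ≠ 0) (w : ℕ → StrongDual ℝ (Fin d → ℝ))
    (hw : ∀ h x, w h x = ∑ k, ∑ i, (m (k, i) : ℝ) * (x i / r k h)) :
    Tendsto w atTop (cocompact _) := by
  classical
  have hex : ∃ k, ∃ i, m (k, i) ≠ 0 := by
    by_contra! hc
    exact hm (funext fun ⟨k, i⟩ => hc k i)
  obtain ⟨K, ⟨i, hi⟩, hmax⟩ : ∃ K, (∃ i, m (K, i) ≠ 0) ∧ ∀ k, K < k → ∀ i, m (k, i) = 0 := by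
    let s : Finset (Fin n) := Finset.univ.filter fun k => ∃ i, m (k, i) ≠ 0
    have hs : s.Nonempty := by
      obtain ⟨k, hk⟩ := hex
      exact ⟨k, by simpa [s] using hk⟩
    refine ⟨s.max' hs, by simpa [s] using s.max'_mem hs, fun k hk i => ?_⟩
    by_contra hne
    exact absurd (s.le_max' k (by simp only [s, Finset.mem_filter, Finset.mem_univ, true_and]
                                  exact ⟨i, hne⟩)) (not_le.2 hk)
  have hev : Continuous (fun L : StrongDual ℝ (Fin d → ℝ) => L (Pi.single i 1)) := by fun_prop
  refine Filter.Tendsto.of_tendsto_comp ?_ (Filter.comap_cocompact_le hev)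
  rw [← Metric.cobounded_eq_cocompact, ← tendsto_norm_atTop_iff_cobounded]
  have heq : ∀ h, ‖((fun L : StrongDual ℝ (Fin d → ℝ) => L (Pi.single i 1)) ∘ w) h‖
      = (r K h)⁻¹ * |∑ k, (m (k, i) : ℝ) * (r K h / r k h)| := by
    intro h
    have hK := hpos K h
    rw [← abs_of_pos (inv_pos.2 hK), ← abs_mul, Real.norm_eq_abs, Finset.mul_sum]
    congr 1
    simp only [Function.comp, hw]
    refine Finset.sum_congr rfl fun k _ => ?_
    rw [Finset.sum_eq_single i]
    · have := hpos k h
      simp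
      field_simp
    · intro b _ hb
      simp [hb]
    · simp
  refine Tendsto.congr (fun h => (heq h).symm) ?_
  have hlim : Tendsto (fun h => ∑ k, (m (k, i) : ℝ) * (r K h / r k h)) atTop
      (𝓝 (∑ k, if k = K then (m (K, i) : ℝ) else 0)) := by
    refine tendsto_finsetSum _ fun k _ => ?_
    rcases lt_trichotomy k K with hk | hk | hk
    · simpa [hk.ne] using (hsep k K hk).const_mul (m (k, i) : ℝ)
    · subst hk
      simp [div_self (hpos k _).ne']
    · simp [hmax k hk i, hk.ne']
  simp only [Finset.sum_ite_eq', Finset.mem_univ, if_true] at hlim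
  refine Tendsto.atTop_mul_pos (C := |(m (K, i) : ℝ)|) (by positivity) ?_ hlim.abs
  refine tendsto_inv_nhdsGT_zero.comp ?_
  exact tendsto_nhdsWithin_iff.2 ⟨h0 K, Eventually.of_forall fun h => hpos K h⟩

lemma ms_int_one (m : ℤ) :
    ∫ x in Set.Ico (0 : ℝ) 1, (fourier m (x : UnitAddCircle) : ℂ) = if m = 0 then 1 else 0 := by
  rw [integral_Ico_eq_integral_Ioc]
  have h1 := UnitAddCircle.integral_preimage 0 (fun t : UnitAddCircle => (fourier m t : ℂ))
  rw [zero_add] at h1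
  rw [h1]
  have h2 := congrFun (fourierCoeff_fourier (T := 1) m) 0
  simp only [fourierCoeff, neg_zero, fourier_zero, one_smul] at h2
  rw [AddCircle.volume_eq_smul_haarAddCircle]
  simp only [ENNReal.ofReal_one, one_smul]
  rw [h2]
  by_cases hm : m = 0
  · subst hm; simp
  · simp [hm, Ne.symm hm]

/-- The point of the torus. -/
def msPt {d n : ℕ} (y : Fin n → Fin d → ℝ) : UnitAddTorus (Fin n × Fin d) :=
  fun p => ((y p.1 p.2 : ℝ) : UnitAddCircle)

lemma msPt_cont {d n : ℕ} : Continuous (msPt (d := d) (n := n)) := by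
  unfold msPt
  refine continuous_pi fun p => ?_
  exact (AddCircle.continuous_mk' (1 : ℝ)).comp (by fun_prop)

lemma ms_int_char {d n : ℕ} (m : Fin n × Fin d → ℤ) :
    ∫ y in unitCellPow d n, UnitAddTorus.mFourier m (msPt y) = if m = 0 then 1 else 0 := by
  have h1 : ∀ y : Fin n → Fin d → ℝ, UnitAddTorus.mFourier m (msPt y)
      = ∏ k, (fun k (z : Fin d → ℝ) => ∏ i, (fourier (m (k, i)) (z i : UnitAddCircle) : ℂ)) k (y k) := by
    intro y
    simp only [UnitAddTorus.mFourier, ContinuousMap.coe_mk, msPt]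
    rw [Fintype.prod_prod_type]
  simp_rw [h1]
  rw [unitCellPow, volume_pi, Measure.restrict_pi_pi,
    integral_fintype_prod_eq_prod
      (fun k (z : Fin d → ℝ) => ∏ i, (fourier (m (k, i)) (z i : UnitAddCircle) : ℂ))]
  have h2 : ∀ k, ∫ z in unitCell d, ∏ i, (fourier (m (k, i)) (z i : UnitAddCircle) : ℂ)
      = ∏ i, if m (k, i) = 0 then 1 else 0 := by
    intro k
    rw [unitCell, volume_pi, Measure.restrict_pi_pi,
      integral_fintype_prod_eq_prod (fun i (t : ℝ) => (fourier (m (k, i)) (t : UnitAddCircle) : ℂ))]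
    exact Finset.prod_congr rfl fun i _ => ms_int_one _
  simp_rw [h2]
  split_ifs with hm
  · subst hm; simp
  · obtain ⟨⟨k, i⟩, hp⟩ := Function.ne_iff.1 hm
    exact Finset.prod_eq_zero (Finset.mem_univ k)
      (Finset.prod_eq_zero (Finset.mem_univ i) (if_neg (by simpa using hp)))

lemma ms_lift {d n : ℕ} (φ : (Fin n → Fin d → ℝ) → ℝ) (hφc : Continuous φ) (hφp : PeriodicN φ) :
    ∃ F : C(UnitAddTorus (Fin n × Fin d), ℂ), ∀ y, F (msPt y) = (φ y : ℂ) := by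
  let G : UnitAddTorus (Fin n × Fin d) → ℂ := fun t =>
    (φ (fun k i => (AddCircle.equivIco (1 : ℝ) 0 (t (k, i)) : ℝ)) : ℂ)
  have hG : ∀ y, G (msPt y) = (φ y : ℂ) := by
    intro y
    simp only [G, msPt]
    congr 1
    rw [← hφp _ (fun k i => ⌊y k i⌋)]
    congr 1
    funext k i
    have := AddCircle.coe_equivIco_mk_apply (1 : ℝ) (y k i)
    simp only [div_one, mul_one] at this
    erw [this]
    exact Int.fract_add_floor _
  have hq : IsOpenQuotientMap
      (Pi.map (fun _ : Fin n × Fin d => fun x : ℝ => (x : UnitAddCircle))) :=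
    IsOpenQuotientMap.piMap fun _ => QuotientAddGroup.isOpenQuotientMap_mk
  have hGc : Continuous G := by
    rw [← hq.continuous_comp_iff]
    have : G ∘ (Pi.map (fun _ : Fin n × Fin d => fun x : ℝ => (x : UnitAddCircle)))
        = fun y => ((φ (fun k i => y (k, i)) : ℝ) : ℂ) := by
      funext y
      exact hG (fun k i => y (k, i))
    rw [this]
    fun_prop
  exact ⟨⟨G, hGc⟩, hG⟩

lemma ms_cell_vol (d n : ℕ) : volume (unitCellPow d n) = 1 := by
  rw [unitCellPow, volume_pi_pi]
  refine Finset.prod_eq_one fun k _ => ?_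
  rw [unitCell, volume_pi_pi]
  simp

lemma ms_char_tendsto {d n : ℕ} (Ω : Set (Fin d → ℝ)) (hΩ : MeasurableSet Ω)
    (r : Fin n → ℕ → ℝ) (hpos : ∀ k h, 0 < r k h)
    (h0 : ∀ k, Tendsto (r k) atTop (𝓝 0))
    (hsep : ∀ i j, i < j → Tendsto (fun h => r j h / r i h) atTop (𝓝 0))
    (u : (Fin d → ℝ) → ℝ) (m : Fin n × Fin d → ℤ) (hm : m ≠ 0) :
    Tendsto (fun h => ∫ x in Ω, (u x : ℂ) *
      UnitAddTorus.mFourier m (msPt (fun k i => x i / r k h))) atTop (𝓝 0) := by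
  let w : ℕ → StrongDual ℝ (Fin d → ℝ) := fun h =>
    ∑ k, ∑ i, ((-(m (k, i)) : ℤ) / r k h : ℝ) • ContinuousLinearMap.proj i
  have hw : ∀ h x, w h x = ∑ k, ∑ i, (((-m) (k, i) : ℤ) : ℝ) * (x i / r k h) := by
    intro h x
    simp only [w, ContinuousLinearMap.sum_apply, ContinuousLinearMap.smul_apply,
      ContinuousLinearMap.proj_apply, smul_eq_mul, Pi.neg_apply]
    refine Finset.sum_congr rfl fun k _ => Finset.sum_congr rfl fun i _ => ?_
    ring
  have ht := ms_freq r hpos h0 hsep (-m) (neg_ne_zero.2 hm) w hw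
  have hRL := (tendsto_integral_exp_smul_cocompact
    (f := Ω.indicator (fun x => (u x : ℂ))) (volume : Measure (Fin d → ℝ))).comp ht
  refine hRL.congr fun h => ?_
  simp only [Function.comp]
  rw [← integral_indicator hΩ]
  congr 1
  funext x
  by_cases hx : x ∈ Ω
  · simp only [Set.indicator_of_mem hx]
    rw [Circle.smul_def, smul_eq_mul, mul_comm]
    congr 1
    simp only [UnitAddTorus.mFourier, ContinuousMap.coe_mk, msPt, fourier_coe_apply]
    rw [← Complex.exp_sum, Real.fourierChar_apply, hw, Fintype.sum_prod_type]
    congr 1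
    push_cast
    simp only [Finset.mul_sum, Finset.sum_mul, ← Finset.sum_neg_distrib]
    refine Finset.sum_congr rfl fun k _ => Finset.sum_congr rfl fun i _ => ?_
    simp
    ring
  · simp [Set.indicator_of_notMem hx]

lemma ms_main {d n : ℕ} (Ω : Set (Fin d → ℝ)) (hΩ : MeasurableSet Ω)
    (r : Fin n → ℕ → ℝ) (hpos : ∀ k h, 0 < r k h)
    (h0 : ∀ k, Tendsto (r k) atTop (𝓝 0))
    (hsep : ∀ i j, i < j → Tendsto (fun h => r j h / r i h) atTop (𝓝 0))
    (u : (Fin d → ℝ) → ℝ) (hu : IntegrableOn u Ω) (F : C(UnitAddTorus (Fin n × Fin d), ℂ)) :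
    Tendsto (fun h => (∫ x in Ω, (u x : ℂ) * F (msPt (fun k i => x i / r k h)))
      - (∫ y in unitCellPow d n, F (msPt y)) * ∫ x in Ω, (u x : ℂ)) atTop (𝓝 0) := by
  have huC : IntegrableOn (fun x => (u x : ℂ)) Ω := hu.ofReal
  have hpc : ∀ h, Continuous fun x : Fin d → ℝ =>
      msPt (fun (k : Fin n) (i : Fin d) => x i / r k h) := fun h =>
    msPt_cont.comp (by fun_prop)
  have hfin : IsFiniteMeasure (volume.restrict (unitCellPow d n)) :=
    ⟨by rw [Measure.restrict_apply_univ, ms_cell_vol]; simp⟩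
  have hint1 : ∀ h (f : C(UnitAddTorus (Fin n × Fin d), ℂ)),
      Integrable (fun x => (u x : ℂ) * f (msPt (fun k i => x i / r k h))) (volume.restrict Ω) := by
    intro h f
    refine Integrable.mul_bdd (c := ‖f‖) huC ?_ ?_
    · exact (f.continuous.comp (hpc h)).aestronglyMeasurable
    · exact Eventually.of_forall fun x => f.norm_coe_le_norm _
  have hint2 : ∀ (f : C(UnitAddTorus (Fin n × Fin d), ℂ)),
      Integrable (fun y => f (msPt y)) (volume.restrict (unitCellPow d n)) := by
    intro f
    refine Integrable.of_bound (C := ‖f‖) (f.continuous.comp msPt_cont).aestronglyMeasurable ?_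
    exact Eventually.of_forall fun x => f.norm_coe_le_norm _
  let D : ℕ → C(UnitAddTorus (Fin n × Fin d), ℂ) →ₗ[ℂ] ℂ := fun h =>
    { toFun := fun f => (∫ x in Ω, (u x : ℂ) * f (msPt (fun k i => x i / r k h)))
        - (∫ y in unitCellPow d n, f (msPt y)) * ∫ x in Ω, (u x : ℂ)
      map_add' := by
        intro f g
        simp only [ContinuousMap.add_apply, mul_add]
        rw [integral_add (hint1 h f) (hint1 h g), integral_add (hint2 f) (hint2 g)]
        ring
      map_smul' := by
        intro a f
        simp only [ContinuousMap.smul_apply, smul_eq_mul, RingHom.id_apply]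
        simp_rw [mul_left_comm _ a]
        rw [integral_const_mul, integral_const_mul]
        ring }
  have hDC : ∀ h f, ‖D h f‖ ≤ ((∫ x in Ω, ‖(u x : ℂ)‖) + ‖∫ x in Ω, (u x : ℂ)‖) * ‖f‖ := by
    intro h f
    refine (norm_sub_le _ _).trans ?_
    rw [add_mul]
    refine add_le_add ?_ ?_
    · rw [← integral_mul_const]
      refine norm_integral_le_of_norm_le (huC.norm.mul_const _) (Eventually.of_forall fun x => ?_)
      rw [norm_mul]
      exact mul_le_mul_of_nonneg_left (f.norm_coe_le_norm _) (norm_nonneg _)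
    · rw [norm_mul, mul_comm]
      refine mul_le_mul_of_nonneg_left ?_ (norm_nonneg _)
      refine (norm_integral_le_of_norm_le_const (C := ‖f‖)
        (Eventually.of_forall fun x => f.norm_coe_le_norm _)).trans ?_
      rw [measureReal_restrict_apply_univ, measureReal_def, ms_cell_vol]
      simp
  refine ms_dense_tendsto D _ hDC _ UnitAddTorus.span_mFourier_closure_eq_top ?_ F
  rintro _ ⟨m, rfl⟩
  simp only [D, LinearMap.coe_mk, AddHom.coe_mk]
  rw [ms_int_char]
  by_cases hm : m = 0
  · subst hm
    simp [UnitAddTorus.mFourier_zero]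
  · simpa [hm] using ms_char_tendsto Ω hΩ r hpos h0 hsep u m hm

/-- **Multiscale Riemann–Lebesgue lemma.** -/
theorem statement0
    (d n : ℕ) (hd : 0 < d) (hn : 0 < n)
    (Ω : Set (Fin d → ℝ)) (hΩo : IsOpen Ω) (hΩb : Bornology.IsBounded Ω)
    (ρ : Fin n → ℝ → ℝ) (hρpos : ∀ k e, 0 < e → 0 < ρ k e)
    (hρ0 : ∀ k, Tendsto (ρ k) (𝓝[>] 0) (𝓝 0))
    (hsep : ∀ (k : ℕ) (hk : k + 1 < n),
      Tendsto (fun e => ρ ⟨k + 1, hk⟩ e / ρ ⟨k, Nat.lt_of_succ_lt hk⟩ e) (𝓝[>] 0) (𝓝 0))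
    (ε : ℕ → ℝ) (hεpos : ∀ h, 0 < ε h) (hε0 : Tendsto ε atTop (𝓝 0))
    (φ : (Fin n → Fin d → ℝ) → ℝ) (hφc : Continuous φ) (hφp : PeriodicN φ)
    (u : (Fin d → ℝ) → ℝ) (hu : IntegrableOn u Ω) :
    Tendsto (fun h => ∫ x in Ω, u x * φ (fun k i => x i / ρ k (ε h))) atTop
      (𝓝 ((∫ y in unitCellPow d n, φ y) * ∫ x in Ω, u x)) := by
  have hε : Tendsto ε atTop (𝓝[>] 0) :=
    tendsto_nhdsWithin_iff.2 ⟨hε0, Eventually.of_forall hεpos⟩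
  have hs : ∀ j : ℕ, ∀ (hj : j < n) (i : ℕ) (hi : i < n), i < j →
      Tendsto (fun e => ρ ⟨j, hj⟩ e / ρ ⟨i, hi⟩ e) (𝓝[>] 0) (𝓝 0) := by
    intro j
    induction j with
    | zero => intro _ i _ h; omega
    | succ j ih =>
      intro hj i hi hij
      rcases Nat.lt_succ_iff_lt_or_eq.1 hij with h | h
      · have h1 := (hsep j hj).mul (ih (Nat.lt_of_succ_lt hj) i hi h)
        rw [mul_zero] at h1
        refine h1.congr' ?_
        filter_upwards [self_mem_nhdsWithin] with e he
        have := hρpos ⟨j, Nat.lt_of_succ_lt hj⟩ e he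
        field_simp
      · subst h
        exact hsep i hj
  obtain ⟨F, hF⟩ := ms_lift φ hφc hφp
  have hmain := ms_main Ω hΩo.measurableSet (fun k h => ρ k (ε h))
    (fun k h => hρpos k _ (hεpos h)) (fun k => (hρ0 k).comp hε)
    (fun i j hij => (hs j j.2 i i.2 hij).comp hε) u hu F
  simp only [hF] at hmain
  have h2 := (Complex.continuous_re.tendsto _).comp hmain
  rw [tendsto_iff_norm_sub_tendsto_zero]
  rw [← tendsto_zero_iff_norm_tendsto_zero]
  refine h2.congr fun h => ?_
  simp only [Function.comp]
  simp only [← Complex.ofReal_mul, integral_complex_ofReal]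
  rw [← Complex.ofReal_sub, Complex.ofReal_re]
end

section
/- For k = 1, …, n let A_k be a Lebesgue measurable subset of □ and let A := A_1 × ⋯ × A_n ⊆ □^n. Then the sequence of functions x ↦ χ_A(v_h(x)) = ∏_{k=1}^n χ_{A_k}(⟨x/ρ_k(ε_h)⟩) converges to the constant |A| = ∏_{k=1}^n |A_k| in the weak* topology of L^∞(Ω); that is, for every u ∈ L^1(Ω), ∫_Ω u(x) χ_A(v_h(x)) dx → |A| ∫_Ω u(x) dx as h → ∞. -/
open MeasureTheory Filter Topology

/-- The oscillating sequence `v_h(x) = (⟨x/ρ_1(ε_h)⟩, …, ⟨x/ρ_n(ε_h)⟩)`,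
where `⟨·⟩` is the componentwise fractional part. -/
noncomputable def vFn {d n : ℕ} (ρ : Fin n → ℝ → ℝ) (ε : ℕ → ℝ) (h : ℕ)
    (x : Fin d → ℝ) : Fin n → Fin d → ℝ :=
  fun k i => Int.fract (x i / ρ k (ε h))


section helpers

variable {d : ℕ}

lemma unitCell_meas : MeasurableSet (unitCell d) :=
  MeasurableSet.univ_pi fun _ => measurableSet_Ico

lemma unitCell_vol : volume (unitCell d) = 1 := by
  simp [unitCell, volume_pi, Measure.pi_pi]

lemma unitCell_norm {z : Fin d → ℝ} (hz : z ∈ unitCell d) : ‖z‖ ≤ 1 := by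
  rw [pi_norm_le_iff_of_nonneg zero_le_one]
  intro i
  have := hz i (Set.mem_univ i)
  rw [Real.norm_eq_abs, abs_of_nonneg this.1]
  exact this.2.le

/-- Integer periodicity. -/
def IntPer (F : (Fin d → ℝ) → ℝ) : Prop :=
  ∀ (m : Fin d → ℤ) (x : Fin d → ℝ), F ((fun i => (m i : ℝ)) + x) = F x

lemma mean_translate {F : (Fin d → ℝ) → ℝ} (hF : IntPer F) (y : Fin d → ℝ) :
    ∫ z in unitCell d, F (y + z) = ∫ z in unitCell d, F z := by
  have h1 := ZSpan.isAddFundamentalDomain (Pi.basisFun ℝ (Fin d)) volume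
  rw [ZSpan.fundamentalDomain_pi_basisFun] at h1
  have h2 := h1.vadd_of_comm y
  have hinv : ∀ (g : (Submodule.span ℤ (Set.range (Pi.basisFun ℝ (Fin d)))))
      (x : Fin d → ℝ), F (g +ᵥ x) = F x := by
    intro g x
    have hg := ((Pi.basisFun ℝ (Fin d)).mem_span_iff_repr_mem ℤ g.1).1 g.2
    choose m hm using hg
    have : (g.1 : Fin d → ℝ) = fun i => (m i : ℝ) := by
      ext i
      have := hm i
      simpa using this.symm
    have h3 := hF m x
    rw [← this] at h3
    exact h3
  have : VAddInvariantMeasure (Submodule.span ℤ (Set.range (Pi.basisFun ℝ (Fin d))))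
      (Fin d → ℝ) volume :=
    inferInstanceAs <| VAddInvariantMeasure
      (Submodule.span ℤ (Set.range (Pi.basisFun ℝ (Fin d)))).toAddSubgroup (Fin d → ℝ) volume
  have h3 := h1.setIntegral_eq h2 hinv
  have h4 := (measurePreserving_add_left (volume : Measure (Fin d → ℝ)) y).setIntegral_image_emb
    (measurableEmbedding_addLeft y) F (unitCell d)
  rw [← h4]
  exact h3.symm

lemma trans_cont {u : (Fin d → ℝ) → ℝ} (hu : Integrable u) :
    Tendsto (fun t : Fin d → ℝ => ∫ x, |u (x + t) - u x|) (𝓝 0) (𝓝 0) := by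
  have hm : MemLp u 1 volume := memLp_one_iff_integrable.2 hu
  have : Fact ((1 : ENNReal) ≠ ⊤) := ⟨by simp⟩
  set f := hm.toLp u with hf
  have hc : Tendsto (fun t : Fin d → ℝ => ‖(DomAddAct.mk t +ᵥ f) - f‖) (𝓝 0) (𝓝 0) := by
    have : Continuous (fun t : Fin d → ℝ => ‖(DomAddAct.mk t +ᵥ f) - f‖) := by
      have h0 : Continuous (fun t : Fin d → ℝ => DomAddAct.mk t) := DomAddAct.continuous_mk
      exact ((h0.vadd continuous_const).sub continuous_const).norm
    have h := this.tendsto 0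
    simpa using h
  refine hc.congr fun t => ?_
  rw [L1.norm_eq_integral_norm]
  refine integral_congr_ae ?_
  have e1 := Lp.coeFn_sub (DomAddAct.mk t +ᵥ f) f
  have e2 : ⇑(DomAddAct.mk t +ᵥ f) =ᵐ[volume] fun x => u (x + t) := by
    rw [hf, DomAddAct.mk_vadd_toLp]
    refine (MemLp.coeFn_toLp _).trans ?_
    refine Eventually.of_forall fun x => ?_
    simp [add_comm]
  have e3 := hm.coeFn_toLp
  filter_upwards [e1, e2, e3] with x h1 h2 h3
  rw [h1, Pi.sub_apply, h2, h3, Real.norm_eq_abs]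

lemma osc_bound {F w : (Fin d → ℝ) → ℝ} (hFm : Measurable F) (hF1 : ∀ x, |F x| ≤ 1)
    (hF : IntPer F) (hw : Integrable w) {r δ : ℝ} (hr : 0 < r)
    (hδ : ∀ z ∈ unitCell d, ∫ x, |w (x + r • z) - w x| ≤ δ) :
    |(∫ x, w x * F (r⁻¹ • x)) - (∫ z in unitCell d, F z) * ∫ x, w x| ≤ δ := by
  have : IsFiniteMeasure (volume.restrict (unitCell d)) :=
    ⟨by simp [unitCell_vol]⟩
  have hFint : ∀ (v : (Fin d → ℝ) → ℝ), Integrable v → ∀ z : Fin d → ℝ,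
      Integrable (fun x => v x * F (r⁻¹ • x + z)) := by
    intro v hv z
    refine hv.mul_bdd (c := 1) ?_ (Eventually.of_forall fun x => hF1 _)
    exact (hFm.comp (by fun_prop)).aestronglyMeasurable
  have hI : ∀ z : Fin d → ℝ, ∫ x, w (x + r • z) * F (r⁻¹ • x + z) = ∫ x, w x * F (r⁻¹ • x) := by
    intro z
    rw [← integral_add_right_eq_self (fun x => w x * F (r⁻¹ • x)) (r • z)]
    simp [smul_add, smul_smul, inv_mul_cancel₀ hr.ne']
  have hprod : Integrable (fun p : (Fin d → ℝ) × (Fin d → ℝ) => w p.2 * F (r⁻¹ • p.2 + p.1))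
      ((volume.restrict (unitCell d)).prod volume) := by
    refine (hw.comp_snd (volume.restrict (unitCell d))).mul_bdd (c := 1) ?_
      (Eventually.of_forall fun x => hF1 _)
    exact (hFm.comp (by fun_prop)).aestronglyMeasurable
  have hmean : ∫ z in unitCell d, ∫ x, w x * F (r⁻¹ • x + z)
      = (∫ z in unitCell d, F z) * ∫ x, w x := by
    rw [integral_integral_swap hprod]
    simp_rw [integral_const_mul, mean_translate hF]
    rw [integral_mul_const, mul_comm]
  have hIc : ∫ z in unitCell d, (∫ x, w x * F (r⁻¹ • x)) = ∫ x, w x * F (r⁻¹ • x) := by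
    simp [Measure.real, unitCell_vol]
  have hdiff : (∫ x, w x * F (r⁻¹ • x)) - (∫ z in unitCell d, F z) * ∫ x, w x
      = ∫ z in unitCell d, ∫ x, (w (x + r • z) - w x) * F (r⁻¹ • x + z) := by
    rw [← hmean, ← hIc, ← integral_sub (integrable_const _) hprod.integral_prod_left]
    refine integral_congr_ae (Eventually.of_forall fun z => ?_)
    simp only
    rw [← hI z, ← integral_sub (hFint _ (hw.comp_add_right (r • z)) z) (hFint _ hw z)]
    simp_rw [sub_mul]
  rw [hdiff, ← Real.norm_eq_abs]
  have := norm_setIntegral_le_of_norm_le_const (μ := (volume : Measure (Fin d → ℝ)))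
    (s := unitCell d) (C := δ)
    (f := fun z => ∫ x, (w (x + r • z) - w x) * F (r⁻¹ • x + z)) (by simp [unitCell_vol]) ?_
  · simpa [Measure.real, unitCell_vol] using this
  · intro z hz
    refine le_trans ?_ (hδ z hz)
    refine norm_integral_le_of_norm_le ((hw.comp_add_right (r • z)).sub hw).abs ?_
    refine Eventually.of_forall fun x => ?_
    rw [Real.norm_eq_abs, abs_mul]
    exact mul_le_of_le_one_right (abs_nonneg _) (hF1 _)

lemma mean_cont {F : (Fin d → ℝ) → ℝ} (hFm : Measurable F) (hF1 : ∀ x, |F x| ≤ 1) :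
    Tendsto (fun t : Fin d → ℝ => ∫ y in unitCell d, |F (y + t) - F y|) (𝓝 0) (𝓝 0) := by
  set B : Set (Fin d → ℝ) := Metric.closedBall 0 2
  set v := B.indicator F with hv
  have hBm : MeasurableSet B := Metric.isClosed_closedBall.measurableSet
  have hvi : Integrable v := by
    rw [hv, integrable_indicator_iff hBm]
    refine Measure.integrableOn_of_bounded (M := 1)
      (measure_closedBall_lt_top.ne) hFm.aestronglyMeasurable
      (Eventually.of_forall fun x => hF1 x)
  refine tendsto_of_tendsto_of_tendsto_of_le_of_le' tendsto_const_nhds (trans_cont hvi)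
    (Eventually.of_forall fun t => integral_nonneg fun _ => abs_nonneg _) ?_
  filter_upwards [Metric.closedBall_mem_nhds (0 : Fin d → ℝ) one_pos] with t ht
  have ht' : ‖t‖ ≤ 1 := by simpa using ht
  calc ∫ y in unitCell d, |F (y + t) - F y|
      = ∫ y in unitCell d, |v (y + t) - v y| := by
        refine setIntegral_congr_fun unitCell_meas fun y hy => ?_
        have hy' := unitCell_norm hy
        have h1 : y ∈ B := by simp [B]; linarith
        have h2 : y + t ∈ B := by
          simp [B]; linarith [norm_add_le y t]
        simp [hv, h1, h2]
    _ ≤ _ := setIntegral_le_integral ((hvi.comp_add_right t).sub hvi).abs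
        (Eventually.of_forall fun _ => abs_nonneg _)

/-- partial products -/
noncomputable def PP (F : ℕ → (Fin d → ℝ) → ℝ) (r : ℕ → ℕ → ℝ) (m h : ℕ) (x : Fin d → ℝ) : ℝ :=
  ∏ k ∈ Finset.range m, F k ((r k h)⁻¹ • x)

lemma PP_meas {F : ℕ → (Fin d → ℝ) → ℝ} (hFm : ∀ k, Measurable (F k)) (r : ℕ → ℕ → ℝ) (m h : ℕ) :
    Measurable (PP F r m h) := by
  unfold PP
  refine Finset.measurable_prod _ fun k _ => (hFm k).comp (by fun_prop)

lemma PP_le {F : ℕ → (Fin d → ℝ) → ℝ} (hF0 : ∀ k x, 0 ≤ F k x) (hF1 : ∀ k x, F k x ≤ 1)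
    (r : ℕ → ℕ → ℝ) (m h : ℕ) (x : Fin d → ℝ) : |PP F r m h x| ≤ 1 := by
  unfold PP
  rw [abs_of_nonneg (Finset.prod_nonneg fun k _ => hF0 k _)]
  exact Finset.prod_le_one (fun k _ => hF0 k _) fun k _ => hF1 k _

lemma small_of_tendsto {r : ℕ → ℝ} (hr : Tendsto r atTop (𝓝 0)) {g : (Fin d → ℝ) → ℝ}
    (hg : Tendsto g (𝓝 0) (𝓝 0)) {δ : ℝ} (hδ : 0 < δ) :
    ∀ᶠ h in atTop, ∀ z ∈ unitCell d, g (r h • z) ≤ δ := by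
  have h1 : ∀ᶠ t in 𝓝 (0 : Fin d → ℝ), g t ≤ δ := hg.eventually_le_const hδ
  obtain ⟨η, hη, hb⟩ := Metric.eventually_nhds_iff.1 h1
  filter_upwards [(Metric.tendsto_nhds.1 hr) η hη] with h hh z hz
  apply hb
  rw [dist_zero_right, norm_smul]
  rw [dist_zero_right] at hh
  exact lt_of_le_of_lt (mul_le_of_le_one_right (norm_nonneg _) (unitCell_norm hz)) hh

lemma PP_int {F : ℕ → (Fin d → ℝ) → ℝ} (hFm : ∀ k, Measurable (F k))
    (hF0 : ∀ k x, 0 ≤ F k x) (hF1 : ∀ k x, F k x ≤ 1) (r : ℕ → ℕ → ℝ)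
    {u : (Fin d → ℝ) → ℝ} (hu : Integrable u) (m h : ℕ) :
    Integrable (fun x => u x * PP F r m h x) :=
  hu.mul_bdd (c := 1) (PP_meas hFm r m h).aestronglyMeasurable
    (Eventually.of_forall fun x => PP_le hF0 hF1 r m h x)

lemma stab {F : ℕ → (Fin d → ℝ) → ℝ} (hFm : ∀ k, Measurable (F k))
    (hF0 : ∀ k x, 0 ≤ F k x) (hF1 : ∀ k x, F k x ≤ 1) (hFp : ∀ k, IntPer (F k))
    {r : ℕ → ℕ → ℝ} {u : (Fin d → ℝ) → ℝ} (hu : Integrable u)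
    {s : ℕ → ℝ} (hs : Tendsto s atTop (𝓝 0)) (m : ℕ)
    (hrpos : ∀ k < m, ∀ h, 0 < r k h) (hr0 : ∀ k < m, Tendsto (r k) atTop (𝓝 0))
    (hsr : ∀ k < m, Tendsto (fun h => s h / r k h) atTop (𝓝 0)) :
    ∀ δ > 0, ∀ᶠ h in atTop, ∀ z ∈ unitCell d,
      ∫ x, |u (x + s h • z) * PP F r m h (x + s h • z) - u x * PP F r m h x| ≤ δ := by
  induction m with
  | zero =>
    intro δ hδ
    have := small_of_tendsto hs (trans_cont hu) hδ
    simpa [PP] using this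
  | succ m ih =>
    intro δ hδ
    have ih' := ih (fun k hk => hrpos k (by omega)) (fun k hk => hr0 k (by omega))
      (fun k hk => hsr k (by omega)) (δ / 3) (by positivity)
    have hFa : ∀ k x, |F k x| ≤ 1 := fun k x => by
      rw [abs_of_nonneg (hF0 k x)]; exact hF1 k x
    set K : ℝ := ∫ x, |u x| with hK
    have hK0 : 0 ≤ K := integral_nonneg fun _ => abs_nonneg _
    have e1 := small_of_tendsto (hsr m (by omega)) (mean_cont (hFm m) (hFa m))
      (δ := δ / 3 / (K + 1)) (by positivity)
    have e2 := small_of_tendsto (hr0 m (by omega)) (trans_cont hu.abs) (δ := δ / 3) (by positivity)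
    filter_upwards [ih', e1, e2] with h h1 h2 h3 z hz
    have hrm := hrpos m (by omega) h
    set w := fun x => u x * PP F r m h x with hw
    have hwi : Integrable w := PP_int hFm hF0 hF1 r hu m h
    set D : (Fin d → ℝ) → ℝ := fun y => |F m (y + (s h / r m h) • z) - F m y| with hD
    have hDm : Measurable D := by
      have := hFm m
      have h5 : Measurable fun y => F m (y + (s h / r m h) • z) := this.comp (by fun_prop)
      exact (h5.sub this).abs
    have hD1 : ∀ y, |D y| ≤ 1 := by
      intro y
      simp only [hD, abs_abs]
      rw [abs_le]
      constructor <;> linarith [hF0 m y, hF1 m y, hF0 m (y + (s h / r m h) • z),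
        hF1 m (y + (s h / r m h) • z)]
    have hDp : IntPer D := by
      intro q x
      simp only [hD]
      rw [add_assoc, hFp m, hFp m]
    have hb := osc_bound hDm hD1 hDp hu.abs hrm h3
    have hmd : (∫ z in unitCell d, D z) ≤ δ / 3 / (K + 1) := h2 z hz
    have hmdK : (∫ z in unitCell d, D z) * K ≤ δ / 3 := by
      calc _ ≤ δ / 3 / (K + 1) * K := by gcongr
        _ ≤ δ / 3 / (K + 1) * (K + 1) := by gcongr; linarith
        _ = δ / 3 := by field_simp
    have hb' : ∫ x, |u x| * D ((r m h)⁻¹ • x) ≤ δ / 3 + δ / 3 := by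
      have := (abs_le.1 hb).2
      linarith
    have hi1 : Integrable fun x => |w (x + s h • z) - w x| :=
      ((hwi.comp_add_right (s h • z)).sub hwi).abs
    have hi2 : Integrable fun x => |u x| * D ((r m h)⁻¹ • x) :=
      hu.abs.mul_bdd (c := 1) (hDm.comp (by fun_prop)).aestronglyMeasurable
        (Eventually.of_forall fun x => hD1 _)
    have hle : ∫ x, |u (x + s h • z) * PP F r (m+1) h (x + s h • z) - u x * PP F r (m+1) h x|
        ≤ ∫ x, (|w (x + s h • z) - w x| + |u x| * D ((r m h)⁻¹ • x)) := by
      refine integral_mono_of_nonneg (Eventually.of_forall fun x => abs_nonneg _)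
        (hi1.add hi2) (Eventually.of_forall fun x => ?_)
      have q1 : ∀ y, u y * PP F r (m+1) h y = w y * F m ((r m h)⁻¹ • y) := by
        intro y
        simp only [hw, PP, Finset.prod_range_succ, mul_assoc]
      simp only [q1]
      have q2 : (r m h)⁻¹ • (x + s h • z) = (r m h)⁻¹ • x + (s h / r m h) • z := by
        rw [smul_add, smul_smul, div_eq_inv_mul]
      rw [q2]
      set a := F m ((r m h)⁻¹ • x + (s h / r m h) • z) with ha
      have q3 : w (x + s h • z) * a - w x * F m ((r m h)⁻¹ • x)
          = (w (x + s h • z) - w x) * a + w x * (a - F m ((r m h)⁻¹ • x)) := by ring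
      rw [q3]
      refine (abs_add_le _ _).trans (add_le_add ?_ ?_)
      · rw [abs_mul]; exact mul_le_of_le_one_right (abs_nonneg _) (hFa _ _)
      · rw [abs_mul]
        refine mul_le_mul_of_nonneg_right ?_ (abs_nonneg _)
        simp only [hw, abs_mul]
        exact mul_le_of_le_one_right (abs_nonneg _) (PP_le hF0 hF1 r m h x)
    rw [integral_add hi1 hi2] at hle
    have := h1 z hz
    linarith

lemma main_lim {F : ℕ → (Fin d → ℝ) → ℝ} (hFm : ∀ k, Measurable (F k))
    (hF0 : ∀ k x, 0 ≤ F k x) (hF1 : ∀ k x, F k x ≤ 1) (hFp : ∀ k, IntPer (F k))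
    {r : ℕ → ℕ → ℝ} {u : (Fin d → ℝ) → ℝ} (hu : Integrable u) (m : ℕ)
    (hrpos : ∀ k < m, ∀ h, 0 < r k h) (hr0 : ∀ k < m, Tendsto (r k) atTop (𝓝 0))
    (hsr : ∀ j < m, ∀ k < j, Tendsto (fun h => r j h / r k h) atTop (𝓝 0)) :
    Tendsto (fun h => ∫ x, u x * PP F r m h x) atTop
      (𝓝 ((∏ k ∈ Finset.range m, ∫ z in unitCell d, F k z) * ∫ x, u x)) := by
  induction m with
  | zero => simp [PP]
  | succ m ih =>
    have ih' := ih (fun k hk => hrpos k (by omega)) (fun k hk => hr0 k (by omega))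
      (fun j hj => hsr j (by omega))
    have hst := stab hFm hF0 hF1 hFp hu (hr0 m (by omega)) m
      (fun k hk => hrpos k (by omega)) (fun k hk => hr0 k (by omega)) (hsr m (by omega))
    have hdiff : Tendsto (fun h => (∫ x, u x * PP F r (m+1) h x)
        - (∫ z in unitCell d, F m z) * ∫ x, u x * PP F r m h x) atTop (𝓝 0) := by
      rw [Metric.tendsto_nhds]
      intro δ hδ
      filter_upwards [hst (δ/2) (by positivity)] with h hh
      have := osc_bound (hFm m) (fun x => by rw [abs_of_nonneg (hF0 m x)]; exact hF1 m x) (hFp m)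
        (PP_int hFm hF0 hF1 r hu m h) (hrpos m (by omega) h) hh
      rw [dist_zero_right, Real.norm_eq_abs]
      simp only [PP, Finset.prod_range_succ, mul_assoc] at this ⊢
      linarith
    have := hdiff.add (ih'.const_mul (∫ z in unitCell d, F m z))
    refine (this.congr fun h => by ring).trans_eq ?_
    rw [Finset.prod_range_succ]
    congr 1
    ring

end helpers

theorem statement2
    (d n : ℕ) (hd : 0 < d) (hn : 0 < n)
    (Ω : Set (Fin d → ℝ)) (hΩo : IsOpen Ω) (hΩb : Bornology.IsBounded Ω)
    (ρ : Fin n → ℝ → ℝ) (hρpos : ∀ k e, 0 < e → 0 < ρ k e)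
    (hρ0 : ∀ k, Tendsto (ρ k) (𝓝[>] 0) (𝓝 0))
    (hsep : ∀ (k : ℕ) (hk : k + 1 < n),
      Tendsto (fun e => ρ ⟨k + 1, hk⟩ e / ρ ⟨k, Nat.lt_of_succ_lt hk⟩ e) (𝓝[>] 0) (𝓝 0))
    (ε : ℕ → ℝ) (hεpos : ∀ h, 0 < ε h) (hε0 : Tendsto ε atTop (𝓝 0))
    (A : Fin n → Set (Fin d → ℝ)) (hAm : ∀ k, MeasurableSet (A k))
    (hAc : ∀ k, A k ⊆ unitCell d)
    (u : (Fin d → ℝ) → ℝ) (hu : IntegrableOn u Ω) :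
    Tendsto
      (fun h => ∫ x in Ω,
        u x * (Set.univ.pi A).indicator (fun _ => (1 : ℝ)) (vFn ρ ε h x)) atTop
      (𝓝 ((∏ k, (volume (A k)).toReal) * ∫ x in Ω, u x)) := by
  have hεt : Tendsto ε atTop (𝓝[>] 0) :=
    tendsto_nhdsWithin_iff.2 ⟨hε0, Eventually.of_forall hεpos⟩
  set fr : (Fin d → ℝ) → (Fin d → ℝ) := fun x i => Int.fract (x i) with hfr
  have hfrm : Measurable fr := by
    refine measurable_pi_lambda _ fun i => ?_
    exact (measurable_pi_apply i).fract
  set A' : ℕ → Set (Fin d → ℝ) := fun k => if hk : k < n then A ⟨k, hk⟩ else ∅ with hA'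
  have hA'm : ∀ k, MeasurableSet (A' k) := by
    intro k
    simp only [hA']
    split_ifs
    · exact hAm _
    · exact MeasurableSet.empty
  set F : ℕ → (Fin d → ℝ) → ℝ := fun k x => (A' k).indicator (fun _ => (1 : ℝ)) (fr x) with hF
  set r : ℕ → ℕ → ℝ := fun k h => if hk : k < n then ρ ⟨k, hk⟩ (ε h) else 0 with hr
  have hrn : ∀ k (hk : k < n), r k = fun h => ρ ⟨k, hk⟩ (ε h) := by
    intro k hk
    ext h
    simp [hr, hk]
  have hrpos : ∀ k < n, ∀ h, 0 < r k h := by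
    intro k hk h
    rw [hrn k hk]
    exact hρpos _ _ (hεpos h)
  have hsr : ∀ j < n, ∀ k < j, Tendsto (fun h => r j h / r k h) atTop (𝓝 0) := by
    intro j
    induction j with
    | zero => intro _ k hk; omega
    | succ j ih =>
      intro hj k hk
      have h1 : Tendsto (fun h => r (j+1) h / r j h) atTop (𝓝 0) := by
        rw [hrn _ hj, hrn j (by omega)]
        exact (hsep j hj).comp hεt
      rcases Nat.lt_succ_iff_lt_or_eq.1 hk with hkj | rfl
      · have h2 := h1.mul (ih (by omega) k hkj)
        rw [mul_zero] at h2
        refine h2.congr fun h => ?_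
        have := (hrpos j (by omega) h).ne'
        field_simp
      · exact h1
  have key := main_lim (F := F) (r := r) (u := Ω.indicator u)
    (fun k => (measurable_const.indicator (hA'm k)).comp hfrm)
    (fun k x => Set.indicator_nonneg (fun _ _ => zero_le_one) _)
    (fun k x => Set.indicator_le_self' (fun _ _ => zero_le_one) _)
    (fun k q x => by simp [hF, hfr]) ((integrable_indicator_iff hΩo.measurableSet).2 hu)
    n hrpos (fun k hk => by rw [hrn k hk]; exact (hρ0 _).comp hεt) hsr
  have hmean : ∀ k : Fin n, ∫ z in unitCell d, F k z = (volume (A k)).toReal := by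
    intro k
    have h1 : ∫ z in unitCell d, F k z
        = ∫ z in unitCell d, (A k).indicator (fun _ => (1 : ℝ)) z := by
      refine setIntegral_congr_fun unitCell_meas fun z hz => ?_
      have : fr z = z := by
        ext i
        exact Int.fract_eq_self.2 (hz i (Set.mem_univ i))
      simp [hF, hA', this]
    rw [h1, setIntegral_indicator (hAm k), Set.inter_eq_self_of_subset_right (hAc k)]
    simp [Measure.real]
  rw [integral_indicator hΩo.measurableSet,
    ← Fin.prod_univ_eq_prod_range (fun k => ∫ z in unitCell d, F k z) n] at key
  simp_rw [hmean] at key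
  refine key.congr fun h => ?_
  rw [← integral_indicator hΩo.measurableSet]
  refine integral_congr_ae (Eventually.of_forall fun x => ?_)
  have hP : PP F r n h x = (Set.univ.pi A).indicator (fun _ => (1 : ℝ)) (vFn ρ ε h x) := by
    have hv : ∀ k : Fin n, F k ((r k h)⁻¹ • x)
        = (A k).indicator (fun _ => (1 : ℝ)) (vFn ρ ε h x k) := by
      intro k
      have : fr ((r k h)⁻¹ • x) = vFn ρ ε h x k := by
        ext i
        simp [hfr, vFn, hr, div_eq_inv_mul]
      simp [hF, hA', this]
    unfold PP
    rw [← Fin.prod_univ_eq_prod_range (fun k => F k ((r k h)⁻¹ • x)) n]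
    simp_rw [hv]
    by_cases hx : vFn ρ ε h x ∈ Set.univ.pi A
    · rw [Set.indicator_of_mem hx]
      exact Finset.prod_eq_one fun k _ => Set.indicator_of_mem (hx k (Set.mem_univ k)) _
    · rw [Set.indicator_of_notMem hx]
      simp only [Set.mem_pi, Set.mem_univ, true_implies, not_forall] at hx
      obtain ⟨k, hk⟩ := hx
      exact Finset.prod_eq_zero (Finset.mem_univ k) (Set.indicator_of_notMem hk _)
  simp only [hP]
  by_cases hx : x ∈ Ω <;> simp [hx]
end
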